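/- The number of right-aligned rook placements on 2δ_n having exactly n-2k blocks with exactly one rook equals the number of permutations of {1,...,n+1} with exactly k ascents such that every ascent is a valley. -/

import Mathlib

/-- Rook placements on the double staircase `2δ_n`: one rook per row (row `i`,
numbered from the top starting at `0`, has `2*(i+1)` cells), at most one rook
per column. -/
def RookPlacement (n : ℕ) :=
  {r : Fin n → Fin (2 * n) //
    Function.Injective r ∧ ∀ i : Fin n, (r i : ℕ) < 2 * (i.val + 1)}

/-- Column `c` (0-indexed) of the rook placement `R` contains a rook. -/
def Occupied {n : ℕ} (R : RookPlacement n) (c : ℕ) : Prop :=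
  ∃ j : Fin n, (R.1 j : ℕ) = c

/-- The number of rooks in block `i` of `R` (block `i` consists of the two
columns `2i` and `2i+1`, 0-indexed). -/
def blockRooks {n : ℕ} (R : RookPlacement n) (i : Fin n) : ℕ :=
  (Finset.univ.filter (fun j : Fin n => (R.1 j : ℕ) / 2 = i.val)).card

/-- `R` is left-aligned: no block has a rook in its right column without a rook
in its left column. -/
def LeftAligned {n : ℕ} (R : RookPlacement n) : Prop :=
  ∀ i : Fin n, Occupied R (2 * i.val + 1) → Occupied R (2 * i.val)

/-- `R` is right-aligned: no block has a rook in its left column without a rook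
in its right column. -/
def RightAligned {n : ℕ} (R : RookPlacement n) : Prop :=
  ∀ i : Fin n, Occupied R (2 * i.val) → Occupied R (2 * i.val + 1)

/-- `bor R` is the number of blocks of `R` containing exactly one rook. -/
def bor {n : ℕ} (R : RookPlacement n) : ℕ :=
  (Finset.univ.filter (fun i : Fin n => blockRooks R i = 1)).card

/-- The one-line word of a permutation of `{1, …, m}` extended by the boundary
convention `σ_0 = σ_{m+1} = ⋯ = 0`: `permWord σ i = σ_i` for `1 ≤ i ≤ m`
(values in `{1, …, m}`) and `0` otherwise. -/
def permWord {m : ℕ} (σ : Equiv.Perm (Fin m)) : ℕ → ℕ := fun i =>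
  if h : 1 ≤ i ∧ i ≤ m then (σ ⟨i - 1, by omega⟩).val + 1 else 0

/-- The number of descents of `σ ∈ S_{m}`: positions `1 ≤ i ≤ m - 1` with
`σ_i > σ_{i+1}`. -/
def desCount {m : ℕ} (σ : Equiv.Perm (Fin m)) : ℕ :=
  ((Finset.Icc 1 (m - 1)).filter (fun i => permWord σ (i + 1) < permWord σ i)).card

/-- The number of ascents of `σ ∈ S_{m}`: positions `1 ≤ i ≤ m - 1` with
`σ_i < σ_{i+1}`. -/
def ascCount {m : ℕ} (σ : Equiv.Perm (Fin m)) : ℕ :=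
  ((Finset.Icc 1 (m - 1)).filter (fun i => permWord σ i < permWord σ (i + 1))).card

/-- `σ ∈ S_m` has no double falls: no position `1 ≤ i ≤ m` with
`σ_{i-1} > σ_i > σ_{i+1}` (with the convention `σ_0 = σ_{m+1} = 0`).
Equivalently, every descent of `σ` is a peak. -/
def NoDoubleFall {m : ℕ} (σ : Equiv.Perm (Fin m)) : Prop :=
  ∀ i ∈ Finset.Icc 1 m,
    ¬ (permWord σ i < permWord σ (i - 1) ∧ permWord σ (i + 1) < permWord σ i)

/-- `σ ∈ S_m` has no double rises: no position `1 ≤ i ≤ m` with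
`σ_{i-1} < σ_i < σ_{i+1}` (with the convention `σ_0 = σ_{m+1} = 0`).
Equivalently, every ascent of `σ` is a valley. -/
def NoDoubleRise {m : ℕ} (σ : Equiv.Perm (Fin m)) : Prop :=
  ∀ i ∈ Finset.Icc 1 m,
    ¬ (permWord σ (i - 1) < permWord σ i ∧ permWord σ i < permWord σ (i + 1))

/-!
A permutation `σ` of `{0, …, n}` is encoded by its Cartesian tree: the root is the smallest letter,
and the letters to its left and right form its left and right subtrees, recursively. Every letter
`i + 1` has a parent `u ≤ i`, so recording parent and side of each letter as a rook in row `i` and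
block `u` gives a rook placement on `2δ_n`. A permutation can be recovered from its tree, and there
are as many rook placements as permutations, namely `(n + 1)!`, so this is a bijection.

A letter has a right child exactly if it is followed by a larger letter, and a left child exactly if
it is preceded by a larger one. With right children recorded in left columns, double rises are
therefore the blocks violating right-alignment, and in a right-aligned placement the ascents are the
full blocks, which together with the blocks having one rook account for all `n` rooks.
-/

open Function Finset

theorem lt_iff_not_lt_of_injective {ι α : Type*} [LinearOrder α] {p : ι → α} {x y : ι}
    (hp : Injective p) (hxy : x ≠ y) : p x < p y ↔ ¬ p y < p x := by
  rw [not_lt, (hp.ne hxy).le_iff_lt]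

namespace CartesianTree

variable {ι α β : Type*} [LinearOrder ι] [LinearOrder α] [LinearOrder β] {p : ι → α} {q : ι → β}
  {u u' v x y : ι} {s s' : Bool}

/-- `u` is a proper ancestor of `x` in the Cartesian tree of the word in which the letter `y` stands
at position `p y`: no letter smaller than `u` separates `u` from the larger letter `x`. -/
structure IsAncestor (p : ι → α) (u x : ι) : Prop where
  lt : u < x
  lt_iff_lt : ∀ y < u, (p y < p u ↔ p y < p x)

/-- The letters hanging below `u` in the Cartesian tree of `p`, on its left (`s = true`) or on its
right (`s = false`). -/
def subtree (p : ι → α) (u : ι) (s : Bool) : Set ι :=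
  {x | IsAncestor p u x ∧ (p x < p u ↔ s = true)}

/-- `v` is the left (`s = true`) or right (`s = false`) child of `u` in the Cartesian tree of `p`,
that is, the root of the corresponding subtree. -/
def IsChild (p : ι → α) (u : ι) (s : Bool) (v : ι) : Prop :=
  IsLeast (subtree p u s) v

theorem IsAncestor.of_lt (hu : IsAncestor p u v) (hu' : IsAncestor p u' v) (h : u' < u) :
    IsAncestor p u' u :=
  ⟨h, fun y hy => (hu'.lt_iff_lt y hy).trans (hu.lt_iff_lt y (hy.trans h)).symm⟩

theorem IsAncestor.of_separates (hv : IsAncestor p u v) (huy : u < y)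
    (hy : ¬ (p y < p u ↔ p y < p v)) : IsAncestor p u y := by
  refine ⟨huy, fun z hz => ?_⟩
  have hzv := hv.lt_iff_lt z hz
  grind

theorem mem_subtree_of_separates (hv : v ∈ subtree p u s) (huy : u < y)
    (hy : ¬ (p y < p u ↔ p y < p v)) : y ∈ subtree p u s := by
  obtain ⟨hanc, hside⟩ := hv
  refine ⟨hanc.of_separates huy hy, ?_⟩
  grind

namespace IsChild

theorem isAncestor (h : IsChild p u s v) : IsAncestor p u v := h.1.1

theorem side_iff (h : IsChild p u s v) : p v < p u ↔ s = true := h.1.2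

theorem lt_iff_lt_of_mem (h : IsChild p u s v) (hx : x ∈ subtree p u s) (hy : y < v)
    (hyu : y ≠ u) : p y < p u ↔ p y < p x := by
  rcases lt_or_gt_of_ne hyu with hyu | huy
  · exact hx.1.lt_iff_lt y hyu
  · by_contra hsep
    exact (h.2 (mem_subtree_of_separates hx huy hsep)).not_gt hy

theorem lt_iff_lt (h : IsChild p u s v) (hy : y < v) (hyu : y ≠ u) :
    p y < p u ↔ p y < p v :=
  h.lt_iff_lt_of_mem h.1 hy hyu

theorem isAncestor_of_mem (hp : Injective p) (h : IsChild p u s v) (hx : x ∈ subtree p u s)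
    (hvx : v < x) : IsAncestor p v x := by
  refine ⟨hvx, fun y hy => ?_⟩
  rcases eq_or_ne y u with rfl | hyu
  · rw [lt_iff_not_lt_of_injective hp hy.ne,
      lt_iff_not_lt_of_injective hp (hy.trans hvx).ne, h.side_iff, hx.2]
  · rw [← h.lt_iff_lt hy hyu, h.lt_iff_lt_of_mem hx hy hyu]

theorem parent_le (hp : Injective p) (h : IsChild p u s v) (h' : IsChild p u' s' v) :
    u ≤ u' := by
  by_contra! hlt
  have hmem : u ∈ subtree p u' s' := by
    refine ⟨h.isAncestor.of_lt h'.isAncestor hlt, ?_⟩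
    rw [lt_iff_not_lt_of_injective hp hlt.ne', h.isAncestor.lt_iff_lt u' hlt,
      ← lt_iff_not_lt_of_injective hp h'.isAncestor.lt.ne', h'.side_iff]
  exact (h'.2 hmem).not_gt h.isAncestor.lt

theorem parent_unique (hp : Injective p) (h : IsChild p u s v) (h' : IsChild p u' s' v) :
    u = u' ∧ s = s' := by
  obtain rfl := (h.parent_le hp h').antisymm (h'.parent_le hp h)
  exact ⟨rfl, Bool.eq_iff_iff.2 (h.side_iff.symm.trans h'.side_iff)⟩

end IsChild

theorem exists_isChild_iff_nonempty [WellFoundedLT ι] :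
    (∃ v, IsChild p u s v) ↔ (subtree p u s).Nonempty :=
  ⟨fun ⟨v, hv⟩ => ⟨v, hv.1⟩, fun h =>
    ⟨wellFounded_lt.min _ h, wellFounded_lt.min_mem _ h, fun _ => wellFounded_lt.min_le⟩⟩

theorem exists_isAncestor [WellFoundedLT ι] (hv : ¬ IsMin v) : ∃ u, IsAncestor p u v := by
  obtain ⟨w, hw⟩ := not_isMin_iff.1 hv
  obtain ⟨m, -, hm⟩ := wellFounded_lt.has_min (Set.univ : Set ι) ⟨v, trivial⟩
  exact ⟨m, (not_lt.1 (hm w trivial)).trans_lt hw, fun y hy => absurd hy (hm y trivial)⟩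

theorem exists_isChild [Finite ι] (hp : Injective p) (hv : ¬ IsMin v) :
    ∃ u s, IsChild p u s v := by
  obtain ⟨u, hu, hmax⟩ :=
    (Set.toFinite {u | IsAncestor p u v}).exists_maximal (exists_isAncestor hv)
  have hmem : v ∈ subtree p u (p v < p u) := ⟨hu, decide_eq_true_iff.symm⟩
  obtain ⟨x, hx⟩ := exists_isChild_iff_nonempty.2 ⟨v, hmem⟩
  have hxv : ¬ x < v := fun hxv =>
    (hmax (hx.isAncestor_of_mem hp hmem hxv) hx.isAncestor.lt.le).not_gt hx.isAncestor.lt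
  exact ⟨u, _, (hx.2 hmem).eq_of_not_lt hxv ▸ hx⟩

theorem lt_iff_lt_of_isChild [WellFoundedLT ι] (hp : Injective p) (hq : Injective q)
    (hex : ∀ v, ¬ IsMin v → ∃ u s, IsChild p u s v ∧ IsChild q u s v) :
    p x < p y ↔ q x < q y := by
  suffices h : ∀ v, ∀ x < v, p x < p v ↔ q x < q v by
    rcases lt_trichotomy x y with hxy | rfl | hxy
    · exact h y x hxy
    · simp only [lt_self_iff_false]
    · rw [lt_iff_not_lt_of_injective hp hxy.ne', lt_iff_not_lt_of_injective hq hxy.ne',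
        h x y hxy]
  intro v
  induction v using WellFoundedLT.induction with
  | ind v ih =>
    intro x hx
    obtain ⟨u, s, hpu, hqu⟩ := hex v (not_isMin_of_lt hx)
    rcases eq_or_ne x u with rfl | hxu
    · rw [lt_iff_not_lt_of_injective hp hx.ne, lt_iff_not_lt_of_injective hq hx.ne,
        hpu.side_iff, hqu.side_iff]
    · rw [← hpu.lt_iff_lt hx hxu, ← hqu.lt_iff_lt hx hxu]
      rcases lt_or_gt_of_ne hxu with hxu | hux
      · exact ih u hpu.isAncestor.lt x hxu
      · rw [lt_iff_not_lt_of_injective hp hux.ne', lt_iff_not_lt_of_injective hq hux.ne',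
          ih x hx u hux]

theorem isAncestor_of_covBy (hp : Injective p) (hux : u < x) (h : p x ⋖ p u ∨ p u ⋖ p x) :
    IsAncestor p u x := by
  refine ⟨hux, fun y hy => ?_⟩
  have hyu := hp.ne hy.ne
  have hyx := hp.ne (hy.trans hux).ne
  rcases h with h | h
  · exact ⟨fun hlt => (h.le_of_lt hlt).lt_of_ne hyx, fun hlt => hlt.trans h.lt⟩
  · exact ⟨fun hlt => hlt.trans h.lt, fun hlt => (h.le_of_lt hlt).lt_of_ne hyu⟩

theorem subtree_true_nonempty_iff {p : ι ≃ α} [IsStronglyCoatomic α] :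
    (subtree p u true).Nonempty ↔ ∃ x, u < x ∧ p x ⋖ p u := by
  constructor
  · rintro ⟨x, hanc, hside⟩
    obtain ⟨a, hxa, hau⟩ := exists_le_covBy_of_lt (hside.2 rfl)
    obtain ⟨y, rfl⟩ := p.surjective a
    refine ⟨y, lt_of_not_ge fun hyu => ?_, hau⟩
    have hyu : y < u := hyu.lt_of_ne fun h => hau.lt.ne (congrArg p h)
    exact ((hanc.lt_iff_lt y hyu).1 hau.lt).not_ge hxa
  · rintro ⟨x, hux, hxu⟩
    exact ⟨x, isAncestor_of_covBy p.injective hux (.inl hxu), iff_of_true hxu.lt rfl⟩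

theorem subtree_false_nonempty_iff {p : ι ≃ α} [IsStronglyAtomic α] :
    (subtree p u false).Nonempty ↔ ∃ x, u < x ∧ p u ⋖ p x := by
  constructor
  · rintro ⟨x, hanc, hside⟩
    have hlt : p u < p x := by
      rw [lt_iff_not_lt_of_injective p.injective hanc.lt.ne, hside]
      exact Bool.false_ne_true
    obtain ⟨a, hua, hax⟩ := exists_covBy_le_of_lt hlt
    obtain ⟨y, rfl⟩ := p.surjective a
    refine ⟨y, lt_of_not_ge fun hyu => ?_, hua⟩
    have hyu : y < u := hyu.lt_of_ne fun h => hua.lt.ne' (congrArg p h)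
    have hyx : p y < p x := hax.lt_of_ne (p.injective.ne (hyu.trans hanc.lt).ne)
    exact hua.lt.not_gt ((hanc.lt_iff_lt y hyu).2 hyx)
  · rintro ⟨x, hux, hxu⟩
    exact ⟨x, isAncestor_of_covBy p.injective hux (.inr hxu),
      iff_of_false hxu.lt.not_gt Bool.false_ne_true⟩

end CartesianTree

open Classical in
theorem card_filter_injective_piFinset_range {n : ℕ} {g : Fin n → ℕ} (hg : Monotone g) :
    #{f ∈ Fintype.piFinset fun i => range (g i) | Injective f} = ∏ i, (g i - i) := by
  induction n with
  | zero => simp [injective_of_subsingleton]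
  | succ n ih =>
    let S : Finset (Fin n → ℕ) :=
      {f ∈ Fintype.piFinset fun i => range (g i.castSucc) | Injective f}
    let free (f : Fin n → ℕ) : Finset ℕ := range (g (Fin.last n)) \ univ.image f
    have card_free : ∀ f ∈ S, #(free f) = g (Fin.last n) - n := by
      intro f hf
      simp only [S, mem_filter, Fintype.mem_piFinset, mem_range] at hf
      have hsub : univ.image f ⊆ range (g (Fin.last n)) := by
        simpa [image_subset_iff] using fun i => (hf.1 i).trans_le (hg (Fin.le_last _))
      rw [card_sdiff_of_subset hsub, card_range, card_image_of_injective _ hf.2, card_fin]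
    let e : (Σ _ : Fin n → ℕ, ℕ) ≃ (Fin (n + 1) → ℕ) :=
      (Equiv.sigmaEquivProd _ _).trans ((Equiv.prodComm _ _).trans (Fin.snocEquiv fun _ => ℕ))
    have mem_sigma_iff (x : Σ _ : Fin n → ℕ, ℕ) : x ∈ S.sigma free ↔
        e x ∈ ({f ∈ Fintype.piFinset fun i => range (g i) | Injective f} : Finset _) := by
      have he : e x = (Fin.snoc x.1 x.2 : Fin (n + 1) → ℕ) := rfl
      simp only [he, S, free, mem_sigma, mem_filter, Fintype.mem_piFinset, mem_sdiff, mem_range,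
        mem_image, mem_univ, true_and, Fin.forall_fin_succ', Fin.snoc_castSucc, Fin.snoc_last,
        Fin.snoc_injective_iff, Set.mem_range]
      tauto
    have card_S : #S = ∏ i : Fin n, (g i.castSucc - i) :=
      ih (hg.comp Fin.strictMono_castSucc.monotone)
    rw [← card_equiv e mem_sigma_iff, card_sigma, sum_congr rfl card_free, sum_const, smul_eq_mul,
      card_S, Fin.prod_univ_castSucc]
    simp only [Fin.val_castSucc, Fin.val_last]

theorem card_injective_lt {n : ℕ} {g : Fin n → ℕ} (hg : Monotone g) :
    Nat.card {f : Fin n → ℕ // Injective f ∧ ∀ i, f i < g i} = ∏ i, (g i - i) := by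
  classical
  rw [← card_filter_injective_piFinset_range hg]
  exact Nat.subtype_card _ fun f => by simp [and_comm]

instance (n : ℕ) : Finite (RookPlacement n) := Subtype.finite

theorem card_rookPlacement (n : ℕ) : Nat.card (RookPlacement n) = (n + 1).factorial := by
  let e : RookPlacement n ≃ {f : Fin n → ℕ // Injective f ∧ ∀ i, f i < 2 * (i.val + 1)} :=
    { toFun R := ⟨fun i => R.1 i, Fin.val_injective.comp R.2.1, R.2.2⟩
      invFun f := ⟨fun i => ⟨f.1 i, (f.2.2 i).trans_le (by omega)⟩,
        fun i j hij => f.2.1 (Fin.ext_iff.1 hij), f.2.2⟩ }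
  have hmono : Monotone fun i : Fin n => 2 * (i.val + 1) := fun i j hij => by
    simpa using hij
  calc Nat.card (RookPlacement n) = ∏ i : Fin n, (2 * (i.val + 1) - i) := by
        rw [Nat.card_congr e, card_injective_lt hmono]
    _ = ∏ i : Fin n, (i.val + 1 + 1) := Finset.prod_congr rfl fun i _ => by omega
    _ = (n + 1).factorial := by
        rw [← prod_range_add_one_eq_factorial, prod_range_succ', zero_add, mul_one, prod_range]

section

variable {m n : ℕ}

theorem not_occupied_of_le (R : RookPlacement n) {c : ℕ} (hc : 2 * n ≤ c) : ¬ Occupied R c := by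
  rintro ⟨j, rfl⟩
  exact (R.1 j).isLt.not_ge hc

open Classical in
theorem card_rooks_eq_ite_occupied (R : RookPlacement n) (c : ℕ) :
    #{j | (R.1 j : ℕ) = c} = if Occupied R c then 1 else 0 := by
  split_ifs with h
  · obtain ⟨j, rfl⟩ := h
    simp [Fin.val_inj, R.2.1.eq_iff, filter_eq']
  · simpa [Occupied, filter_eq_empty_iff] using h

open Classical in
theorem blockRooks_eq_ite_add_ite (R : RookPlacement n) (i : Fin n) : blockRooks R i =
    (if Occupied R (2 * i) then 1 else 0) + if Occupied R (2 * i + 1) then 1 else 0 := by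
  rw [← card_rooks_eq_ite_occupied, ← card_rooks_eq_ite_occupied, ← card_union_of_disjoint,
    ← filter_or, blockRooks]
  · congr! 2 with j
    omega
  · exact disjoint_filter.2 fun j _ => by omega

theorem sum_blockRooks (R : RookPlacement n) : ∑ i, blockRooks R i = n := by
  let block (j : Fin n) : Fin n := ⟨(R.1 j : ℕ) / 2, by omega⟩
  simpa [block, Fin.ext_iff, blockRooks] using
    (card_eq_sum_card_fiberwise (s := univ) (t := univ) fun j _ => mem_univ (block j)).symm

open Classical in
theorem RightAligned.bor_add_two_mul_card_occupied {R : RookPlacement n} (hR : RightAligned R) :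
    bor R + 2 * #{i : Fin n | Occupied R (2 * i)} = n := by
  rw [bor, card_filter, card_filter, mul_sum, ← sum_add_distrib]
  refine (sum_congr rfl fun i _ => ?_).trans (sum_blockRooks R)
  have haligned := hR i
  rw [blockRooks_eq_ite_add_ite]
  grind

theorem permWord_succ (σ : Equiv.Perm (Fin m)) (j : Fin m) : permWord σ (j + 1) = σ j + 1 := by
  simp [permWord]

theorem permWord_lt_succ_iff (σ : Equiv.Perm (Fin m)) (j : Fin m) :
    permWord σ (j + 1) < permWord σ (j + 2) ↔ ∃ i, j ⋖ i ∧ σ j < σ i := by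
  rw [permWord_succ]
  simp only [Fin.covBy_iff, Nat.covBy_iff_add_one_eq]
  constructor
  · intro h
    have hj : j.val + 1 < m := by
      by_contra! hj
      have hzero : permWord σ (j + 2) = 0 := dif_neg (by omega)
      omega
    exact ⟨⟨j + 1, hj⟩, rfl, by simpa [permWord_succ σ ⟨j + 1, hj⟩] using h⟩
  · rintro ⟨i, hi, hlt⟩
    rw [show j.val + 2 = i + 1 by omega, permWord_succ]
    omega

theorem permWord_succ_lt_iff (σ : Equiv.Perm (Fin m)) (j : Fin m) :
    permWord σ (j + 1) < permWord σ j ↔ ∃ i, i ⋖ j ∧ σ j < σ i := by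
  rw [permWord_succ]
  simp only [Fin.covBy_iff, Nat.covBy_iff_add_one_eq]
  constructor
  · intro h
    have hj : j.val ≠ 0 := fun hj => by
      have hzero : permWord σ j = 0 := dif_neg (by omega)
      omega
    obtain ⟨i, hi⟩ := Nat.exists_eq_add_one_of_ne_zero hj
    have hval : permWord σ j = σ ⟨i, by omega⟩ + 1 := hi ▸ permWord_succ σ ⟨i, by omega⟩
    exact ⟨⟨i, by omega⟩, hi.symm, by omega⟩
  · rintro ⟨i, hi, hlt⟩
    rw [← hi, permWord_succ]
    omega

theorem permWord_ne_permWord_succ (σ : Equiv.Perm (Fin m)) (j : Fin m) :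
    permWord σ j ≠ permWord σ (j + 1) := by
  rw [permWord_succ]
  unfold permWord
  split_ifs with h
  · simp only [ne_eq, add_left_inj, Fin.val_inj, σ.injective.eq_iff, Fin.ext_iff]
    omega
  · omega

theorem noDoubleRise_iff (σ : Equiv.Perm (Fin m)) : NoDoubleRise σ ↔
    ∀ j : Fin m, permWord σ (j + 1) < permWord σ (j + 2) → permWord σ (j + 1) < permWord σ j := by
  have hiff (j : Fin m) :
      ¬ (permWord σ j < permWord σ (j + 1) ∧ permWord σ (j + 1) < permWord σ (j + 2)) ↔
        (permWord σ (j + 1) < permWord σ (j + 2) → permWord σ (j + 1) < permWord σ j) := by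
    have hne := permWord_ne_permWord_succ σ j
    grind
  simp only [← hiff, NoDoubleRise, mem_Icc]
  refine ⟨fun h j => h (j + 1) (by omega), fun h i hi => ?_⟩
  obtain ⟨j, rfl⟩ := Nat.exists_eq_add_of_le' hi.1
  exact h ⟨j, by omega⟩

theorem ascCount_eq_card_permWord_lt (σ : Equiv.Perm (Fin m)) :
    ascCount σ = #{j : Fin m | permWord σ (j + 1) < permWord σ (j + 2)} := by
  refine (card_bij (fun j _ => j.val + 1) ?_ (fun i _ j _ h => ?_) ?_).symm
  · intro j hj
    obtain ⟨i, hji, -⟩ := (permWord_lt_succ_iff σ j).1 (by simpa using hj)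
    have hlt : j.val < i := hji.lt
    exact mem_filter.2 ⟨mem_Icc.2 (by omega), (mem_filter.1 hj).2⟩
  · simpa [Fin.ext_iff] using h
  · intro i hi
    rw [mem_filter, mem_Icc] at hi
    obtain ⟨j, rfl⟩ := Nat.exists_eq_add_of_le' hi.1.1
    exact ⟨⟨j, by omega⟩, by simpa using hi.2, rfl⟩

theorem bit_eq_bit_iff {s s' : Bool} {a b : ℕ} : Nat.bit s a = Nat.bit s' b ↔ s = s' ∧ a = b :=
  (Equiv.boolProdNatEquivNat.injective.eq_iff (a := (s, a)) (b := (s', b))).trans Prod.mk_inj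

open CartesianTree

theorem exists_rookPlacement_isChild (σ : Equiv.Perm (Fin (n + 1))) :
    ∃ R : RookPlacement n, ∀ (u : Fin (n + 1)) s i,
      (R.1 i : ℕ) = Nat.bit s u ↔ IsChild σ.symm u s i.succ := by
  choose u s h using fun i : Fin n =>
    exists_isChild σ.symm.injective (not_isMin_of_lt i.succ_pos)
  have hlt (i : Fin n) : Nat.bit (s i) (u i) < 2 * (i.val + 1) := by
    have hui : (u i).val < i + 1 := (h i).isAncestor.lt
    have hs := (s i).toNat_lt
    rw [Nat.bit_val]
    omega
  have hiff (u' : Fin (n + 1)) (s' : Bool) (i : Fin n) :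
      Nat.bit (s i) (u i) = Nat.bit s' u' ↔ IsChild σ.symm u' s' i.succ := by
    rw [bit_eq_bit_iff, Fin.val_inj]
    constructor
    · rintro ⟨rfl, rfl⟩
      exact h i
    · exact fun hi => ((h i).parent_unique σ.symm.injective hi).symm
  refine ⟨⟨fun i => ⟨_, (hlt i).trans_le (by omega)⟩, fun i j hij => ?_, hlt⟩, hiff⟩
  exact Fin.succ_injective n (((hiff _ _ i).1 (Fin.ext_iff.1 hij)).unique (h j))

/-- The rook placement of the Cartesian tree of `σ`: if the letter `i + 1` is a right child of `u`,
the rook in row `i` stands in column `2u`, and if it is a left child, in column `2u + 1`. -/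
noncomputable def toRookPlacement (σ : Equiv.Perm (Fin (n + 1))) : RookPlacement n :=
  (exists_rookPlacement_isChild σ).choose

theorem toRookPlacement_eq_iff {σ : Equiv.Perm (Fin (n + 1))} {u : Fin (n + 1)} {s : Bool}
    {i : Fin n} : ((toRookPlacement σ).1 i : ℕ) = Nat.bit s u ↔ IsChild σ.symm u s i.succ :=
  (exists_rookPlacement_isChild σ).choose_spec u s i

theorem occupied_toRookPlacement_bit_iff {σ : Equiv.Perm (Fin (n + 1))} {u : Fin (n + 1)}
    {s : Bool} :
    Occupied (toRookPlacement σ) (Nat.bit s u) ↔ (subtree σ.symm u s).Nonempty := by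
  simp only [Occupied, toRookPlacement_eq_iff, ← exists_isChild_iff_nonempty]
  refine ⟨fun ⟨i, hi⟩ => ⟨_, hi⟩, fun ⟨v, hv⟩ => ?_⟩
  obtain ⟨i, rfl⟩ := Fin.exists_succ_eq.2 hv.isAncestor.lt.ne_bot
  exact ⟨i, hv⟩

theorem toRookPlacement_injective : Injective (toRookPlacement (n := n)) := by
  intro σ τ h
  have hlt (x y) : σ.symm x < σ.symm y ↔ τ.symm x < τ.symm y := by
    refine lt_iff_lt_of_isChild σ.symm.injective τ.symm.injective fun v hv => ?_
    obtain ⟨u, s, hus⟩ := exists_isChild σ.symm.injective hv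
    obtain ⟨i, rfl⟩ := Fin.exists_succ_eq.2 hus.isAncestor.lt.ne_bot
    refine ⟨u, s, hus, ?_⟩
    rwa [← toRookPlacement_eq_iff, ← h, toRookPlacement_eq_iff]
  have hmono : StrictMono (τ.symm ∘ σ) := fun x y hxy => by
    simpa [← hlt] using hxy
  have hid : τ.symm ∘ σ = id := (hmono.range_inj strictMono_id).1 (by
    rw [(τ.symm.surjective.comp σ.surjective).range_eq, Set.range_id])
  exact Equiv.ext fun x => τ.symm_apply_eq.1 (congrFun hid x)

theorem toRookPlacement_bijective : Bijective (toRookPlacement (n := n)) := by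
  refine toRookPlacement_injective.bijective_of_nat_card_le ?_
  rw [card_rookPlacement, Nat.card_perm, Nat.card_fin]

theorem occupied_toRookPlacement_two_mul_add_one_iff {σ : Equiv.Perm (Fin (n + 1))}
    {j : Fin (n + 1)} :
    Occupied (toRookPlacement σ) (2 * σ j + 1) ↔ permWord σ (j + 1) < permWord σ j := by
  rw [← Nat.bit_true_apply, occupied_toRookPlacement_bit_iff, subtree_true_nonempty_iff,
    permWord_succ_lt_iff, σ.surjective.exists]
  simp only [Equiv.symm_apply_apply, and_comm]

theorem occupied_toRookPlacement_two_mul_iff {σ : Equiv.Perm (Fin (n + 1))} {j : Fin (n + 1)} :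
    Occupied (toRookPlacement σ) (2 * σ j) ↔ permWord σ (j + 1) < permWord σ (j + 2) := by
  rw [← Nat.bit_false_apply, occupied_toRookPlacement_bit_iff, subtree_false_nonempty_iff,
    permWord_lt_succ_iff, σ.surjective.exists]
  simp only [Equiv.symm_apply_apply, and_comm]

theorem noDoubleRise_iff_rightAligned (σ : Equiv.Perm (Fin (n + 1))) :
    NoDoubleRise σ ↔ RightAligned (toRookPlacement σ) := by
  calc NoDoubleRise σ
    _ ↔ ∀ u : Fin (n + 1), Occupied (toRookPlacement σ) (2 * u) →
          Occupied (toRookPlacement σ) (2 * u + 1) := by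
        simp only [noDoubleRise_iff, ← occupied_toRookPlacement_two_mul_add_one_iff,
          ← occupied_toRookPlacement_two_mul_iff]
        exact ⟨fun h => σ.surjective.forall.2 h, fun h j => h (σ j)⟩
    _ ↔ RightAligned (toRookPlacement σ) := by
        rw [Fin.forall_fin_succ']
        exact and_iff_left fun h => absurd h (not_occupied_of_le _ le_rfl)

open Classical in
theorem ascCount_eq_card_occupied (σ : Equiv.Perm (Fin (n + 1))) :
    ascCount σ = #{i : Fin n | Occupied (toRookPlacement σ) (2 * i)} := by
  calc ascCount σ = #{j : Fin (n + 1) | Occupied (toRookPlacement σ) (2 * σ j)} := by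
        simp only [ascCount_eq_card_permWord_lt, occupied_toRookPlacement_two_mul_iff]
    _ = #{u : Fin (n + 1) | Occupied (toRookPlacement σ) (2 * u)} :=
        card_equiv σ fun j => by simp
    _ = #{i : Fin n | Occupied (toRookPlacement σ) (2 * i)} := by
        have hlast : ¬ Occupied (toRookPlacement σ) (2 * Fin.last n) :=
          not_occupied_of_le _ le_rfl
        rw [card_filter, card_filter, Fin.sum_univ_castSucc, if_neg hlast, add_zero]
        rfl

end

/-- The number of right-aligned rook placements on `2δ_n` having exactly
`n - 2k` blocks with exactly one rook equals the number of permutations of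
`{1, …, n+1}` with exactly `k` ascents such that every ascent is a valley
(i.e. with no double rises). -/
theorem right_aligned_count_eq_gamma (n k : ℕ) (hk : 2 * k ≤ n) :
    Nat.card {R : RookPlacement n // RightAligned R ∧ bor R = n - 2 * k} =
      Nat.card {σ : Equiv.Perm (Fin (n + 1)) // ascCount σ = k ∧ NoDoubleRise σ} := by
  refine (Nat.card_congr ((Equiv.ofBijective _ toRookPlacement_bijective).subtypeEquiv
    fun σ => ?_)).symm
  rw [Equiv.ofBijective_apply, and_comm, noDoubleRise_iff_rightAligned,
    ascCount_eq_card_occupied]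
  refine and_congr_right fun hR => ?_
  have hbor := hR.bor_add_two_mul_card_occupied
  omega
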